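/- arXiv:2306.06402 — 4 statements merged into one kernel-verified Lean document; each statement's English description precedes it below -/
import Mathlib

section
/- Let γ, η : ℕ → ℝ be nonincreasing sequences with 0 < γ_j ≤ 1 and η_j > 0 for all j, and suppose the sequence j ↦ γ_j / η_j is nonincreasing. Let d : ℕ → ℝ be nonnegative, let n ≤ t be natural numbers, and let R ≥ 0 satisfy d_{t'} ≤ R² for all t' ≤ n. Then ∑_{t'=0}^{t} (∏_{j=t'+1}^{t} (1 − γ_j)) · γ_{t'} · d_{t'} ≤ R² · (1 − γ_t)^{t−n} / γ_t + (γ_n / η_n) · ∑_{t'=n+1}^{t} η_{t'} · d_{t'}. -/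
theorem wsum_step (γ d : ℕ → ℝ) (t : ℕ) :
    ∑ t' ∈ Finset.range (t + 1 + 1),
        (∏ j ∈ Finset.Icc (t' + 1) (t + 1), (1 - γ j)) * γ t' * d t'
      = (1 - γ (t + 1)) * ∑ t' ∈ Finset.range (t + 1),
        (∏ j ∈ Finset.Icc (t' + 1) t, (1 - γ j)) * γ t' * d t' + γ (t + 1) * d (t + 1) := by
  rw [Finset.sum_range_succ, Finset.mul_sum]
  congr 1
  · apply Finset.sum_congr rfl
    intro i hi
    have hi' := Finset.mem_range.1 hi
    rw [Finset.prod_Icc_succ_top (by omega)]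
    ring
  · simp

/-- Splitting step for weighted sums of squared errors:
`∑_{t'=0}^{t} (∏_{j=t'+1}^{t} (1 − γ_j)) γ_{t'} d_{t'}
  ≤ R² (1 − γ_t)^{t−n} / γ_t + (γ_n / η_n) ∑_{t'=n+1}^{t} η_{t'} d_{t'}`. -/
theorem weighted_error_sum_split
    (γ η d : ℕ → ℝ)
    (hγ_anti : Antitone γ) (hη_anti : Antitone η)
    (hγ_pos : ∀ j, 0 < γ j) (hγ_le : ∀ j, γ j ≤ 1)
    (hη_pos : ∀ j, 0 < η j)
    (hratio_anti : Antitone fun j => γ j / η j)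
    (hd : ∀ t', 0 ≤ d t')
    (n t : ℕ) (hnt : n ≤ t)
    (R : ℝ) (hR : 0 ≤ R)
    (hd_le : ∀ t' ≤ n, d t' ≤ R ^ 2) :
    ∑ t' ∈ Finset.range (t + 1),
        (∏ j ∈ Finset.Icc (t' + 1) t, (1 - γ j)) * γ t' * d t'
      ≤ R ^ 2 * (1 - γ t) ^ (t - n) / γ t
        + γ n / η n * ∑ t' ∈ Finset.Icc (n + 1) t, η t' * d t' := by
  have hbase : ∀ m, m ≤ n → ∑ t' ∈ Finset.range (m + 1),
        (∏ j ∈ Finset.Icc (t' + 1) m, (1 - γ j)) * γ t' * d t' ≤ R ^ 2 := by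
    intro m
    induction m with
    | zero =>
      intro h
      have h1 := hd_le 0 h
      have := mul_le_mul (hγ_le 0) h1 (hd 0) zero_le_one
      simpa using this
    | succ m ih =>
      intro h
      rw [wsum_step]
      have h1 := mul_le_mul_of_nonneg_left (ih (by omega)) (sub_nonneg.2 (hγ_le (m + 1)))
      have h2 := mul_le_mul_of_nonneg_left (hd_le _ h) (hγ_pos (m + 1)).le
      linarith
  have hc : 0 ≤ γ n / η n := (div_pos (hγ_pos n) (hη_pos n)).le
  have hmain : ∀ t, n ≤ t → ∑ t' ∈ Finset.range (t + 1),
        (∏ j ∈ Finset.Icc (t' + 1) t, (1 - γ j)) * γ t' * d t'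
      ≤ R ^ 2 * ∏ j ∈ Finset.Icc (n + 1) t, (1 - γ j)
        + γ n / η n * ∑ t' ∈ Finset.Icc (n + 1) t, η t' * d t' := by
    intro t ht
    induction t, ht using Nat.le_induction with
    | base => simpa using hbase n le_rfl
    | succ m hm ih =>
      rw [wsum_step, Finset.prod_Icc_succ_top (by omega), Finset.sum_Icc_succ_top (by omega)]
      have h1 := mul_le_mul_of_nonneg_left ih (sub_nonneg.2 (hγ_le (m + 1)))
      have h2 : γ (m + 1) ≤ γ n / η n * η (m + 1) :=
        (div_le_iff₀ (hη_pos _)).1 (hratio_anti (by omega : n ≤ m + 1))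
      have h3 := mul_le_mul_of_nonneg_right h2 (hd (m + 1))
      have h4 : 0 ≤ γ n / η n * ∑ t' ∈ Finset.Icc (n + 1) m, η t' * d t' :=
        mul_nonneg hc (Finset.sum_nonneg fun i _ => mul_nonneg (hη_pos i).le (hd i))
      have h5 := mul_nonneg (hγ_pos (m + 1)).le h4
      linarith
  have hprod : ∏ j ∈ Finset.Icc (n + 1) t, (1 - γ j) ≤ (1 - γ t) ^ (t - n) := by
    calc ∏ j ∈ Finset.Icc (n + 1) t, (1 - γ j) ≤ ∏ _j ∈ Finset.Icc (n + 1) t, (1 - γ t) := by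
          apply Finset.prod_le_prod
          · intro i _
            exact sub_nonneg.2 (hγ_le i)
          · intro i hi
            exact sub_le_sub_left (hγ_anti (Finset.mem_Icc.1 hi).2) 1
      _ = (1 - γ t) ^ (t - n) := by simp
  have h0 : 0 ≤ R ^ 2 * (1 - γ t) ^ (t - n) :=
    mul_nonneg (sq_nonneg R) (pow_nonneg (sub_nonneg.2 (hγ_le t)) _)
  have h1 := le_div_self h0 (hγ_pos t) (hγ_le t)
  have h2 := mul_le_mul_of_nonneg_left hprod (sq_nonneg R)
  have h3 := hmain t hnt
  linarith
end

section
/- Let E be a real normed vector space, let γ : ℕ → ℝ be nonincreasing with 0 < γ_j ≤ 1 for all j, let n < t be natural numbers, and let x, y, x̄, ȳ : ℕ → E be sequences satisfying x̄_k = (1 − γ_k)·x̄_{k−1} + γ_k·x_k and ȳ_k = (1 − γ_k)·ȳ_{k−1} + γ_k·y_k for all k with n < k ≤ t, together with x̄_n = ȳ_n. Then ‖x̄_t − ȳ_t‖ ≤ (γ_{n+1}/γ_t) · max_{n < t' ≤ t} ‖x_{t'} − y_{t'}‖. -/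
/-- Coupling bound for two exponential averaging recursions agreeing at index `n`:
`‖x̄_t − ȳ_t‖ ≤ (γ_{n+1}/γ_t) · max_{n < t' ≤ t} ‖x_{t'} − y_{t'}‖`. -/
theorem exponential_averaging_coupling_bound
    {E : Type*} [NormedAddCommGroup E] [NormedSpace ℝ E]
    (γ : ℕ → ℝ) (hγ_anti : Antitone γ)
    (hγ_pos : ∀ j, 0 < γ j) (hγ_le : ∀ j, γ j ≤ 1)
    (n t : ℕ) (hnt : n < t)
    (x y xbar ybar : ℕ → E)
    (hx : ∀ k, n < k → k ≤ t → xbar k = (1 - γ k) • xbar (k - 1) + γ k • x k)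
    (hy : ∀ k, n < k → k ≤ t → ybar k = (1 - γ k) • ybar (k - 1) + γ k • y k)
    (hinit : xbar n = ybar n) :
    ‖xbar t - ybar t‖
      ≤ γ (n + 1) / γ t *
          (Finset.Icc (n + 1) t).sup' (Finset.nonempty_Icc.mpr (by omega))
            (fun t' => ‖x t' - y t'‖) := by
  have hM : ∀ k, n < k → k ≤ t → ‖x k - y k‖ ≤
      (Finset.Icc (n + 1) t).sup' (Finset.nonempty_Icc.mpr (by omega))
            (fun t' => ‖x t' - y t'‖) := fun k h1 h2 =>
    Finset.le_sup' (fun t' => ‖x t' - y t'‖) (Finset.mem_Icc.mpr ⟨h1, h2⟩)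
  generalize (Finset.Icc (n + 1) t).sup' (Finset.nonempty_Icc.mpr (by omega))
            (fun t' => ‖x t' - y t'‖) = M at hM ⊢
  have hM0 : 0 ≤ M := (norm_nonneg _).trans (hM t hnt le_rfl)
  have key : ∀ k, n ≤ k → k ≤ t → ‖xbar k - ybar k‖ ≤ M := by
    intro k hk
    induction k, hk using Nat.le_induction with
    | base => intro _; simpa [hinit] using hM0
    | succ k hk ih =>
      intro hkt
      have e : xbar (k + 1) - ybar (k + 1) =
          (1 - γ (k + 1)) • (xbar k - ybar k) + γ (k + 1) • (x (k + 1) - y (k + 1)) := by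
        rw [hx (k + 1) (by omega) hkt, hy (k + 1) (by omega) hkt, Nat.add_sub_cancel]
        module
      have h1 : 0 ≤ 1 - γ (k + 1) := sub_nonneg.mpr (hγ_le _)
      have h2 : 0 ≤ γ (k + 1) := (hγ_pos _).le
      rw [e]
      refine (norm_add_le _ _).trans ?_
      rw [norm_smul, norm_smul, Real.norm_of_nonneg h1, Real.norm_of_nonneg h2]
      have a := mul_le_mul_of_nonneg_left (ih (by omega)) h1
      have b := mul_le_mul_of_nonneg_left (hM (k + 1) (by omega) hkt) h2
      linarith
  have hr : 1 ≤ γ (n + 1) / γ t := (one_le_div (hγ_pos t)).mpr (hγ_anti hnt)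
  exact (key t hnt.le le_rfl).trans (le_mul_of_one_le_left hM0 hr)
end

section
/- Let E be a real normed vector space. Let α, e, δ : ℕ → ℝ be sequences with 0 < α_t ≤ 1, e_t ≥ 0, δ_t ≥ 0, ∑_t α_t = ∞, ∑_t α_t·e_t < ∞, and δ_t/α_t → 0 as t → ∞. Let x, y, z : ℕ → E satisfy x_t = (1 − α_t)·x_{t−1} + α_t·y_t, ‖y_t − z_t‖ ≤ e_t, and ‖z_t − z_{t−1}‖ ≤ δ_t for all t ≥ 1. Then ‖x_t − z_t‖ → 0 as t → ∞. -/
open Filter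

/-- Deterministic tracking lemma: the averaged estimate
`x_t = (1 − α_t) x_{t−1} + α_t y_t` tracks the slowly moving target `z_t`
when the per-step errors `‖y_t − z_t‖ ≤ e_t` are summable against `α` and the
target drift `‖z_t − z_{t−1}‖ ≤ δ_t` is negligible relative to `α_t`. -/
theorem recursive_average_tracks_moving_target
    {E : Type*} [NormedAddCommGroup E] [NormedSpace ℝ E]
    (α e δ : ℕ → ℝ)
    (hα_pos : ∀ t, 0 < α t) (hα_le : ∀ t, α t ≤ 1)
    (he : ∀ t, 0 ≤ e t) (hδ : ∀ t, 0 ≤ δ t)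
    (hα_div : ¬ Summable α)
    (hαe : Summable fun t => α t * e t)
    (hδα : Tendsto (fun t => δ t / α t) atTop (nhds 0))
    (x y z : ℕ → E)
    (hrec : ∀ t, 1 ≤ t → x t = (1 - α t) • x (t - 1) + α t • y t)
    (hy : ∀ t, 1 ≤ t → ‖y t - z t‖ ≤ e t)
    (hz : ∀ t, 1 ≤ t → ‖z t - z (t - 1)‖ ≤ δ t) :
    Tendsto (fun t => ‖x t - z t‖) atTop (nhds 0) := by
  have hstep : ∀ t, ‖x (t + 1) - z (t + 1)‖ ≤
      (1 - α (t + 1)) * ‖x t - z t‖ + δ (t + 1) + α (t + 1) * e (t + 1) := by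
    intro t
    have h1 := hrec (t + 1) (by omega)
    have h2 := hy (t + 1) (by omega)
    have h3 := hz (t + 1) (by omega)
    simp only [Nat.add_sub_cancel] at h1 h3
    have ha := hα_pos (t + 1)
    have hb := hα_le (t + 1)
    have hd := hδ (t + 1)
    have heq : x (t + 1) - z (t + 1) = (1 - α (t + 1)) • (x t - z t)
        - (1 - α (t + 1)) • (z (t + 1) - z t) + α (t + 1) • (y (t + 1) - z (t + 1)) := by
      rw [h1]; module
    have hn : ‖x (t + 1) - z (t + 1)‖ ≤ (1 - α (t + 1)) * ‖x t - z t‖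
        + (1 - α (t + 1)) * ‖z (t + 1) - z t‖ + α (t + 1) * ‖y (t + 1) - z (t + 1)‖ := by
      rw [heq]
      refine (norm_add_le _ _).trans ?_
      have h4 := norm_sub_le ((1 - α (t + 1)) • (x t - z t))
        ((1 - α (t + 1)) • (z (t + 1) - z t))
      rw [norm_smul, norm_smul, Real.norm_of_nonneg (by linarith : 0 ≤ 1 - α (t + 1))] at h4
      rw [norm_smul (α (t + 1)), Real.norm_of_nonneg ha.le]
      linarith
    have h5 : (1 - α (t + 1)) * ‖z (t + 1) - z t‖ ≤ δ (t + 1) := by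
      nlinarith [norm_nonneg (z (t + 1) - z t)]
    have h6 : α (t + 1) * ‖y (t + 1) - z (t + 1)‖ ≤ α (t + 1) * e (t + 1) :=
      mul_le_mul_of_nonneg_left h2 ha.le
    linarith
  rw [Metric.tendsto_atTop]
  intro ε' hε'
  obtain ⟨ε, hε, hεε⟩ : ∃ ε : ℝ, 0 < ε ∧ 3 * ε = ε' := ⟨ε' / 3, by positivity, by ring⟩
  have htail := tendsto_sum_nat_add (fun t => α t * e t)
  obtain ⟨T, hT1, hT2⟩ := ((eventually_forall_ge_atTop.2 (hδα.eventually_lt_const hε)).and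
    (((tendsto_add_atTop_iff_nat 1).2 htail).eventually_lt_const hε)).exists
  have hδT : ∀ t, T ≤ t → δ t ≤ ε * α t := fun t ht =>
    ((div_lt_iff₀ (hα_pos t)).1 (hT1 t ht)).le
  have hS : ∀ n, ∑ k ∈ Finset.range n, α (k + (T + 1)) * e (k + (T + 1)) ≤ ε := by
    intro n
    have hs : Summable (fun k => α (k + (T + 1)) * e (k + (T + 1))) :=
      (summable_nat_add_iff (f := fun t => α t * e t) (T + 1)).2 hαe
    exact (hs.sum_le_tsum _ (fun k _ => mul_nonneg (hα_pos _).le (he _))).trans hT2.le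
  have hind : ∀ n, ‖x (n + T) - z (n + T)‖ ≤ ε
      + ∑ k ∈ Finset.range n, α (k + (T + 1)) * e (k + (T + 1))
      + Real.exp (-∑ k ∈ Finset.range n, α (k + (T + 1))) * ‖x T - z T‖ := by
    intro n
    induction n with
    | zero => simp [hε.le]
    | succ n ih =>
      rw [Finset.sum_range_succ, Finset.sum_range_succ, neg_add, Real.exp_add]
      have h := hstep (n + T)
      have hi : n + 1 + T = n + T + 1 := by omega
      have hi' : n + (T + 1) = n + T + 1 := by omega
      rw [hi, hi']
      have hd := hδT (n + T + 1) (by omega)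
      have ha := hα_pos (n + T + 1)
      have hb := hα_le (n + T + 1)
      have hex := Real.add_one_le_exp (-α (n + T + 1))
      have hSn : 0 ≤ ∑ k ∈ Finset.range n, α (k + (T + 1)) * e (k + (T + 1)) :=
        Finset.sum_nonneg (fun k _ => mul_nonneg (hα_pos _).le (he _))
      have hP : 0 ≤ Real.exp (-∑ k ∈ Finset.range n, α (k + (T + 1))) * ‖x T - z T‖ := by
        positivity
      have m1 := mul_le_mul_of_nonneg_left ih (by linarith : 0 ≤ 1 - α (n + T + 1))
      have m2 := mul_le_mul_of_nonneg_right hex hP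
      have m3 := mul_nonneg ha.le hSn
      linarith
  have hdiv : Tendsto (fun n => ∑ k ∈ Finset.range n, α (k + (T + 1))) atTop atTop :=
    (not_summable_iff_tendsto_nat_atTop_of_nonneg (fun k => (hα_pos _).le)).1
      (fun h => hα_div ((summable_nat_add_iff (T + 1)).1 h))
  have hlim := ((Real.tendsto_exp_neg_atTop_nhds_zero.comp hdiv).mul_const ‖x T - z T‖)
  rw [zero_mul] at hlim
  obtain ⟨N, hN⟩ := eventually_atTop.1 (hlim.eventually_lt_const hε)
  refine ⟨N + T, fun t ht => ?_⟩
  obtain ⟨n, rfl⟩ : ∃ n, t = n + T := ⟨t - T, by omega⟩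
  have h1 := hN n (by omega)
  simp only [Function.comp] at h1
  rw [Real.dist_eq, sub_zero, abs_of_nonneg (norm_nonneg _)]
  linarith [hind n, hS n]
end

section
/- Let κ₁, κ₂, κ₃, κ₄ be real numbers satisfying 1 > 2κ₂ − 1 > κ₁ > 1/2, min(κ₁/2 + κ₂/2 + κ₃/2 − 1/2, κ₁ + κ₃) > 3/5 > κ₄ > 0, κ₁ + κ₄/2 − κ₃/2 > 1, and κ₁ + κ₃/2 + κ₄/2 > 13/10. Let m > 0 and define, for t ≥ 3, α_t = m^{−1/2}·t^{−κ₁}, β_t = m^{−1/2}·t^{−κ₂}, η_t = m^{−1/2}·t^{−κ₃}, γ_t = t^{−κ₄}, and n_t = t − ⌈t^{3/5}⌉ (so n_t ≥ 1 for t ≥ 3). Then all of the following series converge: (i) ∑_{t≥3} α_t·(1 − γ_t)^{(t − n_t)/2}·γ_{n_t}^{−1/2}; (ii) ∑_{t≥3} α_t·γ_{n_t}^{1/2}·η_{n_t}^{−1/2}; (iii) ∑_{t≥3} m·α_t·γ_{n_t}^{1/2}·η_{n_t}^{1/2}·t^{3/10}; (iv) ∑_{t≥3} m·α_t·η_{n_t}·t^{−2/5};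 (v) ∑_{t≥3} m·α_t·η_{n_t}·β_{n_t}·t^{6/5}. -/
open Filter in
theorem aux_half (n : ℕ → ℕ) (hn : ∀ t : ℕ, n t = t - ⌈(t : ℝ) ^ ((3 : ℝ) / 5)⌉₊) :
    ∀ᶠ s : ℕ in atTop, 1 ≤ s ∧ 1 ≤ n s ∧ (s : ℝ) / 2 ≤ n s ∧ (n s : ℝ) ≤ s ∧
      (s : ℝ) ^ ((3 : ℝ) / 5) ≤ ((s - n s : ℕ) : ℝ) := by
  have h := (tendsto_rpow_neg_atTop (show (0:ℝ) < 2/5 by norm_num)).eventually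
    (eventually_le_nhds (show (0:ℝ) < 1/4 by norm_num))
  have h' := (tendsto_natCast_atTop_atTop (R := ℝ)).eventually h
  filter_upwards [h', eventually_ge_atTop 4] with s hs hs4
  have hs4' : (4:ℝ) ≤ s := by exact_mod_cast hs4
  have hpos : (0:ℝ) ≤ (s : ℝ) ^ ((3 : ℝ) / 5) := by positivity
  have hs0 : (0:ℝ) < s := by linarith
  have e0 : (s : ℝ) ^ ((3 : ℝ) / 5) = (s : ℝ) ^ (-(2 / 5) : ℝ) * s := by
    rw [← Real.rpow_add_one hs0.ne']; norm_num
  replace hs : (s : ℝ) ^ ((3 : ℝ) / 5) ≤ 1 / 4 * s := by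
    rw [e0]; exact mul_le_mul_of_nonneg_right hs hs0.le
  have hc := Nat.ceil_lt_add_one hpos
  have hc' := Nat.le_ceil ((s : ℝ) ^ ((3 : ℝ) / 5))
  have e := hn s
  set c := ⌈(s : ℝ) ^ ((3 : ℝ) / 5)⌉₊ with hcdef
  have hcs : (c:ℝ) ≤ s / 2 := by linarith
  have hcs' : c ≤ s := by
    have : (c:ℝ) ≤ s := by linarith
    exact_mod_cast this
  have e2 : (n s : ℝ) = s - c := by rw [e, Nat.cast_sub hcs']
  have e3 : s - n s = c := by omega
  refine ⟨by omega, ?_, by rw [e2]; linarith, by rw [e2]; linarith [hpos.trans hc'], by rw [e3]; exact hc'⟩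
  have : (1:ℝ) ≤ n s := by rw [e2]; linarith
  exact_mod_cast this

theorem aux_rpow (x y p : ℝ) (hx : 1 ≤ x) (h1 : x / 2 ≤ y) (h2 : y ≤ x) :
    y ^ p ≤ (1 + (1/2 : ℝ) ^ p) * x ^ p := by
  have hx0 : 0 < x := by linarith
  have hy0 : 0 < y := by linarith
  have a1 : 0 ≤ x ^ p := by positivity
  have a2 : 0 ≤ (1/2:ℝ) ^ p * x ^ p := by positivity
  rcases le_total 0 p with hp | hp
  · have := Real.rpow_le_rpow hy0.le h2 hp
    linarith
  · have := Real.rpow_le_rpow_of_nonpos (by linarith : 0 < x / 2) h1 hp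
    have e : (x/2) ^ p = (1/2:ℝ)^p * x ^ p := by
      rw [← Real.mul_rpow (by norm_num) hx0.le]; congr 1; ring
    linarith

open Filter in
theorem aux_summable (n : ℕ → ℕ) (hn : ∀ t : ℕ, n t = t - ⌈(t : ℝ) ^ ((3 : ℝ) / 5)⌉₊)
    (f : ℕ → ℝ) (C a p : ℝ) (hC : 0 ≤ C) (hap : a + p < -1)
    (hf : ∀ᶠ s : ℕ in atTop, |f s| ≤ C * (s : ℝ) ^ a * (n s : ℝ) ^ p) : Summable f := by
  refine summable_of_isBigO_nat (Real.summable_nat_rpow.2 hap)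
    (Asymptotics.IsBigO.of_bound (C * (1 + (1/2 : ℝ) ^ p)) ?_)
  filter_upwards [hf, aux_half n hn] with s hs hh
  obtain ⟨h1, -, h2, h3, -⟩ := hh
  have h1' : (1:ℝ) ≤ s := by exact_mod_cast h1
  have := aux_rpow s (n s) p h1' h2 h3
  have hs0 : (0:ℝ) < s := by linarith
  rw [Real.norm_eq_abs, Real.norm_of_nonneg (by positivity), Real.rpow_add hs0]
  calc |f s| ≤ C * (s : ℝ) ^ a * (n s : ℝ) ^ p := hs
    _ ≤ C * (s : ℝ) ^ a * ((1 + (1/2 : ℝ) ^ p) * (s:ℝ) ^ p) := by gcongr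
    _ = _ := by ring

open Filter in
theorem aux_exp (δ : ℝ) (hδ : 0 < δ) :
    ∀ᶠ s : ℕ in atTop, Real.exp (-(1/2) * (s : ℝ) ^ δ) ≤ (s : ℝ) ^ (-2 : ℝ) := by
  have h := (tendsto_rpow_mul_exp_neg_mul_atTop_nhds_zero (2/δ) (1/2) (by norm_num)).comp
    ((tendsto_rpow_atTop hδ).comp (tendsto_natCast_atTop_atTop (R := ℝ)))
  filter_upwards [h.eventually (eventually_le_nhds (show (0:ℝ) < 1 by norm_num)),
    eventually_ge_atTop 1] with s hs h1
  have h1' : (1:ℝ) ≤ s := by exact_mod_cast h1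
  have hs0 : (0:ℝ) < s := by linarith
  simp only [Function.comp] at hs
  rw [← Real.rpow_mul hs0.le, mul_div_cancel₀ _ hδ.ne'] at hs
  rw [Real.rpow_neg hs0.le, ← one_div, le_div_iff₀ (by positivity), mul_comm]
  exact hs


/-- Verification of the coupled summability conditions 4) of Assumption 2 for
the polynomial step sizes `α_t = m^{−1/2} t^{−κ₁}`, `β_t = m^{−1/2} t^{−κ₂}`,
`η_t = m^{−1/2} t^{−κ₃}`, `γ_t = t^{−κ₄}` and the delayed index
`n_t = t − ⌈t^{3/5}⌉`, in the parameter region stated after Assumption 2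
(all sums over `t ≥ 3`, index shifted by 3). -/
theorem polynomial_step_sizes_satisfy_coupled_assumptions
    (κ₁ κ₂ κ₃ κ₄ m : ℝ)
    (h1 : 1 / 2 < κ₁) (h2 : κ₁ < 2 * κ₂ - 1) (h3 : 2 * κ₂ - 1 < 1)
    (h4 : 3 / 5 < κ₁ / 2 + κ₂ / 2 + κ₃ / 2 - 1 / 2) (h5 : 3 / 5 < κ₁ + κ₃)
    (h6 : κ₄ < 3 / 5) (h7 : 0 < κ₄)
    (h8 : 1 < κ₁ + κ₄ / 2 - κ₃ / 2) (h9 : 13 / 10 < κ₁ + κ₃ / 2 + κ₄ / 2)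
    (hm : 0 < m)
    (α β η γ : ℕ → ℝ) (n : ℕ → ℕ)
    (hα : ∀ t : ℕ, 1 ≤ t → α t = m ^ (-(1 / 2) : ℝ) * (t : ℝ) ^ (-κ₁))
    (hβ : ∀ t : ℕ, 1 ≤ t → β t = m ^ (-(1 / 2) : ℝ) * (t : ℝ) ^ (-κ₂))
    (hη : ∀ t : ℕ, 1 ≤ t → η t = m ^ (-(1 / 2) : ℝ) * (t : ℝ) ^ (-κ₃))
    (hγ : ∀ t : ℕ, 1 ≤ t → γ t = (t : ℝ) ^ (-κ₄))
    (hn : ∀ t : ℕ, n t = t - ⌈(t : ℝ) ^ ((3 : ℝ) / 5)⌉₊) :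
    Summable (fun t : ℕ =>
        α (t + 3) * (1 - γ (t + 3)) ^ ((((t + 3) - n (t + 3) : ℕ) : ℝ) / 2)
          * γ (n (t + 3)) ^ (-(1 / 2) : ℝ)) ∧
    Summable (fun t : ℕ =>
        α (t + 3) * γ (n (t + 3)) ^ ((1 : ℝ) / 2) * η (n (t + 3)) ^ (-(1 / 2) : ℝ)) ∧
    Summable (fun t : ℕ =>
        m * α (t + 3) * γ (n (t + 3)) ^ ((1 : ℝ) / 2) * η (n (t + 3)) ^ ((1 : ℝ) / 2)
          * ((t : ℝ) + 3) ^ ((3 : ℝ) / 10)) ∧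
    Summable (fun t : ℕ =>
        m * α (t + 3) * η (n (t + 3)) * ((t : ℝ) + 3) ^ (-((2 : ℝ) / 5))) ∧
    Summable (fun t : ℕ =>
        m * α (t + 3) * η (n (t + 3)) * β (n (t + 3)) * ((t : ℝ) + 3) ^ ((6 : ℝ) / 5)) := by
  have H := aux_half n hn
  set M := m ^ (-(1 / 2) : ℝ) with hM
  have hM0 : 0 < M := by positivity
  have key : ∀ (f g : ℕ → ℝ), (∀ t, g t = f (t + 3)) → Summable f → Summable g := by
    intro f g hfg hf
    have := (summable_nat_add_iff 3).2 hf
    exact this.congr (fun t => (hfg t).symm)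
  refine ⟨?_, ?_, ?_, ?_, ?_⟩
  · refine key (fun s => α s * (1 - γ s) ^ (((s - n s : ℕ) : ℝ) / 2)
          * γ (n s) ^ (-(1 / 2) : ℝ)) _ (fun t => rfl) ?_
    refine aux_summable n hn _ M (-κ₁ + -2) (κ₄ / 2) hM0.le (by linarith) ?_
    filter_upwards [H, aux_exp (3/5 - κ₄) (by linarith)] with s hs he
    obtain ⟨h1, h2, h3, h4, h5⟩ := hs
    have hs1 : (1:ℝ) ≤ s := by exact_mod_cast h1
    have hs0 : (0:ℝ) < s := by linarith
    have hn0 : (0:ℝ) < n s := by exact_mod_cast h2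
    rw [hα s h1, hγ s h1, hγ _ h2, ← Real.rpow_mul hn0.le,
      show -κ₄ * -(1/2) = κ₄/2 by ring, Real.rpow_add hs0]
    have g1 : (s:ℝ) ^ (-κ₄) ≤ 1 := Real.rpow_le_one_of_one_le_of_nonpos hs1 (by linarith)
    have g0 : 0 ≤ 1 - (s:ℝ) ^ (-κ₄) := by linarith
    have g2 : (1 - (s:ℝ) ^ (-κ₄)) ^ (((s - n s : ℕ) : ℝ) / 2) ≤ (s:ℝ) ^ (-2:ℝ) := by
      refine le_trans ?_ he
      refine (Real.rpow_le_rpow g0 (Real.one_sub_le_exp_neg _) (by positivity)).trans ?_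
      rw [← Real.exp_mul]
      apply Real.exp_le_exp.2
      have e : (s:ℝ) ^ (3/5 - κ₄) = (s:ℝ) ^ (-κ₄) * (s:ℝ) ^ ((3:ℝ)/5) := by
        rw [← Real.rpow_add hs0]; congr 1; ring
      rw [e]
      have := mul_le_mul_of_nonneg_left h5 (show 0 ≤ (s:ℝ) ^ (-κ₄) by positivity)
      linarith
    have g3 : 0 ≤ (1 - (s:ℝ) ^ (-κ₄)) ^ (((s - n s : ℕ) : ℝ) / 2) := Real.rpow_nonneg g0 _
    rw [abs_of_nonneg (by positivity), ← mul_assoc M]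
    gcongr
  · refine key (fun s => α s * γ (n s) ^ ((1 : ℝ) / 2) * η (n s) ^ (-(1 / 2) : ℝ)) _
      (fun t => rfl) ?_
    refine aux_summable n hn _ (M * M ^ (-(1/2) : ℝ)) (-κ₁) (-κ₄/2 + κ₃/2) (by positivity)
      (by linarith) ?_
    filter_upwards [H] with s hs
    obtain ⟨h1, h2, h3, h4, h5⟩ := hs
    have hs0 : (0:ℝ) < s := by exact_mod_cast h1
    have hn0 : (0:ℝ) < n s := by exact_mod_cast h2
    rw [hα s h1, hγ _ h2, hη _ h2, Real.mul_rpow hM0.le (by positivity), ← Real.rpow_mul hn0.le,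
      ← Real.rpow_mul hn0.le, Real.rpow_add hn0, abs_of_nonneg (by positivity),
      show -κ₄ * (1/2) = -κ₄/2 by ring, show -κ₃ * -(1/2) = κ₃/2 by ring]
    exact le_of_eq (by ring)
  · refine key (fun s => m * α s * γ (n s) ^ ((1 : ℝ) / 2) * η (n s) ^ ((1 : ℝ) / 2)
      * (s : ℝ) ^ ((3 : ℝ) / 10)) _ (fun t => by push_cast; rfl) ?_
    refine aux_summable n hn _ (m * M * M ^ ((1:ℝ)/2)) (-κ₁ + 3/10) (-κ₄/2 + -κ₃/2)
      (by positivity) (by linarith) ?_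
    filter_upwards [H] with s hs
    obtain ⟨h1, h2, h3, h4, h5⟩ := hs
    have hs0 : (0:ℝ) < s := by exact_mod_cast h1
    have hn0 : (0:ℝ) < n s := by exact_mod_cast h2
    rw [hα s h1, hγ _ h2, hη _ h2, Real.mul_rpow hM0.le (by positivity), ← Real.rpow_mul hn0.le,
      ← Real.rpow_mul hn0.le, Real.rpow_add hn0, Real.rpow_add hs0, abs_of_nonneg (by positivity),
      show -κ₄ * (1/2) = -κ₄/2 by ring, show -κ₃ * (1/2) = -κ₃/2 by ring]
    exact le_of_eq (by ring)
  · refine key (fun s => m * α s * η (n s) * (s : ℝ) ^ (-((2 : ℝ) / 5))) _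
      (fun t => by push_cast; rfl) ?_
    refine aux_summable n hn _ (m * M * M) (-κ₁ + -(2/5)) (-κ₃)
      (by positivity) (by linarith) ?_
    filter_upwards [H] with s hs
    obtain ⟨h1, h2, h3, h4, h5⟩ := hs
    have hs0 : (0:ℝ) < s := by exact_mod_cast h1
    have hn0 : (0:ℝ) < n s := by exact_mod_cast h2
    rw [hα s h1, hη _ h2, Real.rpow_add hs0, abs_of_nonneg (by positivity)]
    exact le_of_eq (by ring)
  · refine key (fun s => m * α s * η (n s) * β (n s) * (s : ℝ) ^ ((6 : ℝ) / 5)) _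
      (fun t => by push_cast; rfl) ?_
    refine aux_summable n hn _ (m * M * M * M) (-κ₁ + 6/5) (-κ₃ + -κ₂)
      (by positivity) (by linarith) ?_
    filter_upwards [H] with s hs
    obtain ⟨h1, h2, h3, h4, h5⟩ := hs
    have hs0 : (0:ℝ) < s := by exact_mod_cast h1
    have hn0 : (0:ℝ) < n s := by exact_mod_cast h2
    rw [hα s h1, hη _ h2, hβ _ h2, Real.rpow_add hs0, Real.rpow_add hn0,
      abs_of_nonneg (by positivity)]
    exact le_of_eq (by ring)
end
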